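/- Let C = ⟨(x+1)^a + u(x+1)^{t₁} h₁(x) + u²(x+1)^{t₂} h₂(x), u(x+1)^{2^{s-1}} + u²(x+1)^{t₃} h₃(x), u²(x+1)^{2^s−a}⟩ be an ideal of 𝓡, where 1 ≤ a ≤ 2^s − 1 and h₁, h₂, h₃ ∈ 𝓚, t₁, t₂, t₃ ≥ 0. If C is self-dual, then u²(x+1)^k ∉ C for every 0 ≤ k < 2^s − a; equivalently, min{k ≥ 0 : u²(x+1)^k ∈ C} = 2^s − a. -/

import Mathlib

noncomputable section

open Polynomial

/-- The finite field `GF(2^m)`. -/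
abbrev Fq (m : ℕ) : Type := GaloisField 2 m

/-- The ring `R₃ = F[u]/⟨u³⟩`. -/
abbrev R3 (m : ℕ) : Type := AdjoinRoot (X ^ 3 : (Fq m)[X])

/-- The polynomial `x^{2^s} + 1` over `R₃`. -/
abbrev gR (m s : ℕ) : (R3 m)[X] := X ^ (2 ^ s) + 1

/-- The polynomial `x^{2^s} + 1` over `F`. -/
abbrev gK (m s : ℕ) : (Fq m)[X] := X ^ (2 ^ s) + 1

/-- The ring `𝓡 = R₃[x]/⟨x^{2^s}+1⟩`. -/
abbrev RR (m s : ℕ) : Type := AdjoinRoot (gR m s)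

/-- The ring `𝓚 = F[x]/⟨x^{2^s}+1⟩`. -/
abbrev KK (m s : ℕ) : Type := AdjoinRoot (gK m s)

/-- The element `u` of `R₃`. -/
def uu (m : ℕ) : R3 m := AdjoinRoot.root _

/-- The element `u` of `𝓡`. -/
def uR (m s : ℕ) : RR m s := algebraMap (R3 m) (RR m s) (uu m)

/-- The element `x` of `𝓡`. -/
def xR (m s : ℕ) : RR m s := AdjoinRoot.root _

/-- The element `x` of `𝓚`. -/
def xK (m s : ℕ) : KK m s := AdjoinRoot.root _

lemma gR_monic (m s : ℕ) : (gR m s).Monic := by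
  have h : (gR m s) = X ^ (2 ^ s) + C 1 := by simp [gR]
  rw [h]; exact monic_X_pow_add_C _ (by positivity)

lemma gK_monic (m s : ℕ) : (gK m s).Monic := by
  have h : (gK m s) = X ^ (2 ^ s) + C 1 := by simp [gK]
  rw [h]; exact monic_X_pow_add_C _ (by positivity)

/-- The standard representative (of degree `< 2^s`) of an element of `𝓡`. -/
def repR (m s : ℕ) (c : RR m s) : (R3 m)[X] := AdjoinRoot.modByMonicHom (gR_monic m s) c

/-- The standard representative (of degree `< 2^s`) of an element of `𝓚`. -/
def repK (m s : ℕ) (c : KK m s) : (Fq m)[X] := AdjoinRoot.modByMonicHom (gK_monic m s) c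

/-- The `j`-th coefficient of the standard representative of `c ∈ 𝓡`. -/
def coeffR (m s : ℕ) (c : RR m s) (j : ℕ) : R3 m := (repR m s c).coeff j

/-- The dot product on `𝓡`. -/
def dotR (m s : ℕ) (c d : RR m s) : R3 m :=
  ∑ j ∈ Finset.range (2 ^ s), coeffR m s c j * coeffR m s d j

/-- The dual of a set of codewords. -/
def dualSet (m s : ℕ) (S : Set (RR m s)) : Set (RR m s) :=
  {c | ∀ d ∈ S, dotR m s c d = 0}

/-- A cyclic code (ideal of `𝓡`) is self-dual if it coincides with its dual. -/
def IsSelfDual (m s : ℕ) (C : Ideal (RR m s)) : Prop :=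
  (C : Set (RR m s)) = dualSet m s (C : Set (RR m s))

/-- The annihilator of a set of codewords. -/
def annSet (m s : ℕ) (S : Set (RR m s)) : Set (RR m s) :=
  {c | ∀ d ∈ S, c * d = 0}

/-- The reciprocal `c*(x) = x^{deg c} c(x⁻¹)` of an element of `𝓡`. -/
def recip (m s : ℕ) (c : RR m s) : RR m s :=
  xR m s ^ (repR m s c).natDegree *
    Polynomial.aeval (Ring.inverse (xR m s)) (repR m s c)

/-- Reduction `R₃ → F` modulo `u`. -/
def epsR3 (m : ℕ) : R3 m →+* Fq m :=
  AdjoinRoot.lift (RingHom.id (Fq m)) 0 (by simp)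

lemma xK_pow_add_one (m s : ℕ) : (xK m s) ^ (2 ^ s) + 1 = 0 := by
  have h := AdjoinRoot.eval₂_root (gK m s)
  simpa [gK, xK] using h

lemma xR_pow_add_one (m s : ℕ) : (xR m s) ^ (2 ^ s) + 1 = 0 := by
  have h := AdjoinRoot.eval₂_root (gR m s)
  simpa [gR, xR] using h

/-- Reduction `μ : 𝓡 → 𝓚` modulo `u`. -/
def muRK (m s : ℕ) : RR m s →+* KK m s :=
  AdjoinRoot.lift ((algebraMap (Fq m) (KK m s)).comp (epsR3 m)) (xK m s) (by
    simp only [gR, eval₂_add, eval₂_pow, eval₂_X, eval₂_one]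
    exact xK_pow_add_one m s)

/-- The natural inclusion `𝓚 → 𝓡`. -/
def KtoR (m s : ℕ) : KK m s →+* RR m s :=
  AdjoinRoot.lift ((algebraMap (R3 m) (RR m s)).comp (algebraMap (Fq m) (R3 m))) (xR m s) (by
    simp only [gK, eval₂_add, eval₂_pow, eval₂_X, eval₂_one]
    exact xR_pow_add_one m s)

/-- The `i`-th torsion code of a set `S ⊆ 𝓡`. -/
def TorSet (m s : ℕ) (S : Set (RR m s)) (i : ℕ) : Set (KK m s) :=
  muRK m s '' {f | (uR m s) ^ i * f ∈ S}

/-- The torsion degree `T_i`: the (unique) `k` with `Tor_i = ⟨(x+1)^k⟩`. -/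
def Tdeg (m s : ℕ) (S : Set (RR m s)) (i : ℕ) : ℕ :=
  sInf {k | TorSet m s S i =
    ((Ideal.span {(xK m s + 1) ^ k} : Ideal (KK m s)) : Set (KK m s))}

/-- Substitution `h(x) ↦ h(x⁻¹)` on `𝓚`. -/
def invSub (m s : ℕ) (h : KK m s) : KK m s :=
  Polynomial.aeval (Ring.inverse (xK m s)) (repK m s h)



lemma repR_mk_of_deg (m s : ℕ) (q : (R3 m)[X]) (hq : q.degree < (2 ^ s : ℕ)) :
    repR m s (AdjoinRoot.mk _ q) = q := by
  have hnt : Nontrivial (R3 m) := by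
    refine AdjoinRoot.nontrivial _ (by simp)
  unfold repR
  rw [AdjoinRoot.modByMonicHom_mk]
  rw [Polynomial.modByMonic_eq_self_iff (gR_monic m s)]
  have h : (gR m s) = X ^ (2 ^ s) + C 1 := by simp [gR]
  rw [h, degree_X_pow_add_C (by positivity)]
  exact hq

lemma repR_deg (m s : ℕ) (c : RR m s) : (repR m s c).degree < (2 ^ s : ℕ) := by
  have hnt : Nontrivial (R3 m) := by
    refine AdjoinRoot.nontrivial _ (by simp)
  obtain ⟨p, rfl⟩ := AdjoinRoot.mk_surjective c
  unfold repR
  rw [AdjoinRoot.modByMonicHom_mk]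
  have h : (gR m s) = X ^ (2 ^ s) + C 1 := by simp [gR]
  have h2 := degree_modByMonic_lt p (gR_monic m s)
  refine h2.trans_eq ?_
  rw [h, degree_X_pow_add_C (by positivity)]

lemma mk_repR (m s : ℕ) (c : RR m s) : AdjoinRoot.mk (gR m s) (repR m s c) = c :=
  AdjoinRoot.mk_leftInverse (gR_monic m s) c

lemma repR_x_mul (m s : ℕ) (c : RR m s) :
    repR m s (xR m s * c) =
      X * repR m s c - C ((repR m s c).coeff (2 ^ s - 1)) * gR m s := by
  have h1 : xR m s * c = AdjoinRoot.mk (gR m s)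
      (X * repR m s c - C ((repR m s c).coeff (2 ^ s - 1)) * gR m s) := by
    rw [map_sub, map_mul, map_mul, AdjoinRoot.mk_self, mk_repR, AdjoinRoot.mk_X]
    simp [xR]
  rw [h1, repR_mk_of_deg]
  rw [degree_lt_iff_coeff_zero]
  intro j hj
  have hd := (degree_lt_iff_coeff_zero _ _).1 (repR_deg m s c)
  have hp : 0 < 2 ^ s := by positivity
  obtain ⟨i, rfl⟩ : ∃ i, j = i + 1 := ⟨j - 1, by omega⟩
  rw [coeff_sub, coeff_X_mul, coeff_C_mul, gR, coeff_add, coeff_X_pow, coeff_one]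
  by_cases hi : i + 1 = 2 ^ s
  · have : i = 2 ^ s - 1 := by omega
    rw [hi, this]
    simp
  · simp [hi, hd i (by omega)]

lemma coeffR_x_mul_zero (m s : ℕ) (c : RR m s) :
    coeffR m s (xR m s * c) 0 = - coeffR m s c (2 ^ s - 1) := by
  have hp : (2 ^ s) ≠ 0 := by positivity
  unfold coeffR
  rw [repR_x_mul]
  simp [gR, coeff_X_pow, hp.symm]

lemma coeffR_x_mul_succ (m s : ℕ) (c : RR m s) (j : ℕ) (hj : j + 1 < 2 ^ s) :
    coeffR m s (xR m s * c) (j + 1) = coeffR m s c j := by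
  unfold coeffR
  rw [repR_x_mul]
  simp [gR, coeff_X_pow, hj.ne, coeff_one]

lemma dotR_x_x (m s : ℕ) (c d : RR m s) :
    dotR m s (xR m s * c) (xR m s * d) = dotR m s c d := by
  have hp : 0 < 2 ^ s := by positivity
  obtain ⟨N, hN⟩ : ∃ N, 2 ^ s = N + 1 := ⟨2 ^ s - 1, by omega⟩
  unfold dotR
  rw [hN, Finset.sum_range_succ', Finset.sum_range_succ, coeffR_x_mul_zero, coeffR_x_mul_zero,
    neg_mul_neg]
  have : 2 ^ s - 1 = N := by omega
  rw [this]
  congr 1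
  refine Finset.sum_congr rfl fun j hj => ?_
  rw [Finset.mem_range] at hj
  rw [coeffR_x_mul_succ _ _ _ _ (by omega), coeffR_x_mul_succ _ _ _ _ (by omega)]

lemma coeffR_add (m s : ℕ) (c d : RR m s) (j : ℕ) :
    coeffR m s (c + d) j = coeffR m s c j + coeffR m s d j := by
  simp [coeffR, repR]

lemma coeffR_u (m s : ℕ) (c : RR m s) (j : ℕ) :
    coeffR m s (uR m s * c) j = uu m * coeffR m s c j := by
  have : uR m s * c = uu m • c := by rw [Algebra.smul_def]; rfl
  rw [this]
  simp [coeffR, repR]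

lemma coeffR_u2 (m s : ℕ) (c : RR m s) (j : ℕ) :
    coeffR m s (uR m s ^ 2 * c) j = uu m ^ 2 * coeffR m s c j := by
  rw [pow_two, mul_assoc, coeffR_u, coeffR_u]; ring

lemma dotR_add_left (m s : ℕ) (c c' d : RR m s) :
    dotR m s (c + c') d = dotR m s c d + dotR m s c' d := by
  simp [dotR, coeffR_add, add_mul, Finset.sum_add_distrib]

lemma dotR_add_right (m s : ℕ) (c d d' : RR m s) :
    dotR m s c (d + d') = dotR m s c d + dotR m s c d' := by
  simp [dotR, coeffR_add, mul_add, Finset.sum_add_distrib]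

lemma dotR_y (m s : ℕ) (c d : RR m s) :
    dotR m s ((xR m s + 1) * c) d = dotR m s (xR m s * c) ((xR m s + 1) * d) := by
  rw [add_mul, add_mul, one_mul, one_mul, dotR_add_left, dotR_add_right, dotR_x_x, add_comm]

lemma dotR_y_pow (m s a : ℕ) (c d : RR m s) :
    dotR m s ((xR m s + 1) ^ a * c) d
      = dotR m s (xR m s ^ a * c) ((xR m s + 1) ^ a * d) := by
  induction a generalizing c d with
  | zero => simp
  | succ a ih =>
    have e1 : (xR m s + 1) ^ (a + 1) * c = (xR m s + 1) * ((xR m s + 1) ^ a * c) := by ring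
    have e2 : xR m s * ((xR m s + 1) ^ a * c) = (xR m s + 1) ^ a * (xR m s * c) := by ring
    rw [e1, dotR_y, e2, ih]
    congr 1 <;> ring

lemma uu_cube (m : ℕ) : uu m ^ 3 = 0 := by
  have h := AdjoinRoot.mk_self (f := (X ^ 3 : (Fq m)[X]))
  rw [map_pow, AdjoinRoot.mk_X] at h
  exact h

lemma uu_sq_ne (m : ℕ) : uu m ^ 2 ≠ 0 := by
  have h : uu m ^ 2 = AdjoinRoot.mk (X ^ 3 : (Fq m)[X]) (X ^ 2) := by
    rw [map_pow, AdjoinRoot.mk_X]; rfl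
  rw [h, Ne, AdjoinRoot.mk_eq_zero]
  intro hd
  rw [pow_dvd_pow_iff X_ne_zero not_isUnit_X] at hd
  omega

lemma dotR_u2_u (m s : ℕ) (c d : RR m s) :
    dotR m s (uR m s ^ 2 * c) (uR m s * d) = 0 := by
  unfold dotR
  refine Finset.sum_eq_zero fun j _ => ?_
  rw [coeffR_u2, coeffR_u]
  calc _ = uu m ^ 3 * (coeffR m s c j * coeffR m s d j) := by ring
    _ = 0 := by rw [uu_cube, zero_mul]

lemma dotR_one (m s : ℕ) :
    dotR m s (uR m s ^ 2 * (xR m s + 1) ^ (2 ^ s - 1)) 1 = uu m ^ 2 := by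
  have hp : 0 < 2 ^ s := by positivity
  have h1 : repR m s 1 = 1 := by
    have := repR_mk_of_deg m s 1 (by
      refine degree_one_le.trans_lt ?_
      exact_mod_cast hp)
    simpa using this
  have h2 : repR m s ((xR m s + 1) ^ (2 ^ s - 1)) = (X + 1) ^ (2 ^ s - 1) := by
    have := repR_mk_of_deg m s ((X + 1) ^ (2 ^ s - 1)) (by
      have : ((X + C 1 : (R3 m)[X]) ^ (2 ^ s - 1)).degree ≤ ((2 ^ s - 1 : ℕ) : WithBot ℕ) := by
        refine (degree_pow_le_of_le (a := 1) (2 ^ s - 1)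
          (by haveI : Nontrivial (R3 m) := AdjoinRoot.nontrivial _ (by simp)
              exact (degree_X_add_C (1 : R3 m)).le)).trans ?_
        simp
      rw [C_1] at this
      refine this.trans_lt ?_
      exact_mod_cast Nat.sub_lt hp one_pos)
    rw [← this]
    simp [xR]
  unfold dotR
  rw [Finset.sum_eq_single 0]
  · rw [coeffR_u2]
    unfold coeffR
    rw [h1, h2]
    simp [coeff_zero_eq_eval_zero]
  · intro j _ hj
    have : coeffR m s 1 j = 0 := by
      unfold coeffR; rw [h1, coeff_one]; simp [hj]
    rw [this, mul_zero]
  · simp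

/-- For a self-dual code of the displayed form, `u²(x+1)^k ∉ C` for all
`k < 2^s − a`; equivalently `min{k : u²(x+1)^k ∈ C} = 2^s − a`. -/
theorem stmt17 (m s : ℕ) (hm : 0 < m) (hs : 0 < s)
    (a t₁ t₂ t₃ : ℕ) (h₁ h₂ h₃ : KK m s)
    (ha1 : 1 ≤ a) (ha2 : a ≤ 2 ^ s - 1)
    (C : Ideal (RR m s))
    (hC : C = Ideal.span
      {(xR m s + 1) ^ a + uR m s * (xR m s + 1) ^ t₁ * KtoR m s h₁ +
         uR m s ^ 2 * (xR m s + 1) ^ t₂ * KtoR m s h₂,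
       uR m s * (xR m s + 1) ^ (2 ^ (s - 1)) + uR m s ^ 2 * (xR m s + 1) ^ t₃ * KtoR m s h₃,
       uR m s ^ 2 * (xR m s + 1) ^ (2 ^ s - a)})
    (hsd : IsSelfDual m s C) :
    (∀ k < 2 ^ s - a, uR m s ^ 2 * (xR m s + 1) ^ k ∉ C) ∧
    sInf {k : ℕ | uR m s ^ 2 * (xR m s + 1) ^ k ∈ C} = 2 ^ s - a := by
  have key : ∀ k < 2 ^ s - a, uR m s ^ 2 * (xR m s + 1) ^ k ∉ C := by
    intro k hk hmem
    set g := (xR m s + 1) ^ a + uR m s * (xR m s + 1) ^ t₁ * KtoR m s h₁ +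
         uR m s ^ 2 * (xR m s + 1) ^ t₂ * KtoR m s h₂ with hg
    have hgC : g ∈ C := by
      rw [hC]; exact Ideal.subset_span (by simp)
    have hc : uR m s ^ 2 * (xR m s ^ a * (xR m s + 1) ^ (2 ^ s - 1 - a)) ∈ C := by
      obtain ⟨e, he⟩ : ∃ e, 2 ^ s - 1 - a = k + e := ⟨2 ^ s - 1 - a - k, by omega⟩
      rw [he, pow_add]
      have := C.mul_mem_left (xR m s ^ a * (xR m s + 1) ^ e) hmem
      convert this using 1
      ring
    have hdual : uR m s ^ 2 * (xR m s ^ a * (xR m s + 1) ^ (2 ^ s - 1 - a)) ∈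
        dualSet m s (C : Set (RR m s)) := by
      have h := hsd
      unfold IsSelfDual at h
      rw [← h]; exact hc
    have h0 := hdual g hgC
    have hg' : g = (xR m s + 1) ^ a + uR m s * ((xR m s + 1) ^ t₁ * KtoR m s h₁ +
         uR m s * ((xR m s + 1) ^ t₂ * KtoR m s h₂)) := by rw [hg]; ring
    rw [hg', dotR_add_right, dotR_u2_u, add_zero] at h0
    have h1 := dotR_one m s
    have e1 : uR m s ^ 2 * (xR m s + 1) ^ (2 ^ s - 1) =
        (xR m s + 1) ^ a * (uR m s ^ 2 * (xR m s + 1) ^ (2 ^ s - 1 - a)) := by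
      have : 2 ^ s - 1 = a + (2 ^ s - 1 - a) := by omega
      conv_lhs => rw [this, pow_add]
      ring
    rw [e1, dotR_y_pow, mul_one, mul_left_comm, h0] at h1
    exact uu_sq_ne m h1.symm
  refine ⟨key, ?_⟩
  have hin : 2 ^ s - a ∈ {k : ℕ | uR m s ^ 2 * (xR m s + 1) ^ k ∈ C} := by
    show _ ∈ C
    rw [hC]; exact Ideal.subset_span (by simp)
  refine le_antisymm (Nat.sInf_le hin) ?_
  by_contra hlt
  exact key _ (not_le.1 hlt) (Nat.sInf_mem ⟨_, hin⟩)
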